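/- arXiv:2502.16388 — 4 statements merged into one kernel-verified Lean document; each statement's English description precedes it below -/
import Mathlib

section
/- For real numbers 0 < a ≤ b < 1 with a + b ≤ 1, real q ∈ (1, 2), and any real x with |x| ≥ a, we have a·|x/a + 1|^q + b·|x/b − 1|^q − (a + b) ≥ (q − 1)·|x|^q / 3. -/
lemma aux_two_rpow (p : ℝ) : 1 + p * 0.69 ≤ (2:ℝ) ^ p ∨ p < 0 := by
  by_cases hp : p < 0
  · exact Or.inr hp
  · left
    push Not at hp
    rw [Real.rpow_def_of_pos (by norm_num)]
    have h := Real.add_one_le_exp (Real.log 2 * p)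
    have := Real.log_two_gt_d9
    nlinarith

lemma aux_pos (q t : ℝ) (h1 : 1 < q) (h2 : q < 2) (ht : 1 ≤ t) :
    (q - 1) / 3 * t ^ q ≤ (1 + t) ^ q - 1 - q * t := by
  have h2p : 1 + (q - 1) * 0.69 ≤ (2:ℝ) ^ (q - 1) :=
    (aux_two_rpow (q - 1)).resolve_right (by linarith)
  have hder : ∀ y : ℝ, 1 ≤ y → HasDerivAt
      (fun t : ℝ => (1 + t) ^ q - 1 - q * t - (q - 1) / 3 * t ^ q)
      (1 * q * (1 + y) ^ (q - 1) - q * 1 - (q - 1) / 3 * (1 * q * y ^ (q - 1))) y := by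
    intro y hy
    have e1 : HasDerivAt (fun t : ℝ => (1 + t) ^ q) (1 * q * (1 + y) ^ (q - 1)) y :=
      ((hasDerivAt_id y).const_add 1).rpow_const (Or.inl (by simp; linarith))
    have e2 : HasDerivAt (fun t : ℝ => t ^ q) (1 * q * y ^ (q - 1)) y :=
      (hasDerivAt_id y).rpow_const (Or.inl (by simp; linarith))
    exact ((e1.sub_const 1).sub ((hasDerivAt_id y).const_mul q)).sub (e2.const_mul _)
  have hmono : MonotoneOn (fun t : ℝ => (1 + t) ^ q - 1 - q * t - (q - 1) / 3 * t ^ q)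
      (Set.Ici 1) := by
    apply monotoneOn_of_deriv_nonneg (convex_Ici 1)
    · exact fun y hy => (hder y hy).continuousAt.continuousWithinAt
    · intro y hy
      rw [interior_Ici] at hy
      exact (hder y (le_of_lt hy)).differentiableAt.differentiableWithinAt
    · intro y hy
      rw [interior_Ici] at hy
      have hy : (1:ℝ) < y := hy
      rw [(hder y hy.le).deriv]
      have k1 : y ^ (q - 1) ≤ (1 + y) ^ (q - 1) :=
        Real.rpow_le_rpow (by linarith) (by linarith) (by linarith)
      have k2 : (2:ℝ) ^ (q - 1) ≤ (1 + y) ^ (q - 1) :=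
        Real.rpow_le_rpow (by linarith) (by linarith) (by linarith)
      have k3 : (q - 1) / 3 * y ^ (q - 1) ≤ (q - 1) / 3 * (1 + y) ^ (q - 1) :=
        mul_le_mul_of_nonneg_left k1 (by linarith)
      have k4 : (1 - (q - 1) / 3) * (1 + (q - 1) * 0.69) ≤ (1 - (q - 1) / 3) * (1 + y) ^ (q - 1) :=
        mul_le_mul_of_nonneg_left (h2p.trans k2) (by linarith)
      have k5 : 1 ≤ (1 - (q - 1) / 3) * (1 + (q - 1) * 0.69) := by nlinarith
      have k6 : 0 ≤ q * ((1 + y) ^ (q - 1) - 1 - (q - 1) / 3 * y ^ (q - 1)) :=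
        mul_nonneg (by linarith) (by linarith)
      linarith
  have h := hmono (Set.mem_Ici.2 le_rfl) (Set.mem_Ici.2 ht) ht
  have h3 : (2:ℝ) ^ q = 2 * 2 ^ (q - 1) := by
    rw [Real.rpow_sub_one (by norm_num)]; ring
  norm_num at h
  rw [h3] at h
  linarith

lemma aux_neg (q s : ℝ) (h1 : 1 < q) (h2 : q < 2) (hs : 1 ≤ s) :
    (q - 1) / 3 * s ^ q ≤ (s - 1) ^ q - 1 + q * s := by
  have e (y : ℝ) (hy : 0 ≤ y) : y ^ q = y * y ^ (q - 1) := by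
    conv_rhs => rw [← Real.rpow_one_add' hy (by linarith)]
    congr 1; ring
  have k1 : s ^ (q - 1) ≤ (s - 1) ^ (q - 1) + 1 := by
    have := Real.rpow_add_le_add_rpow (a := s - 1) (b := 1) (p := q - 1) (by linarith) (by norm_num)
      (by linarith) (by linarith)
    simpa using this
  have k2 : (s - 1) ^ (q - 1) ≤ s := by
    calc (s - 1) ^ (q - 1) ≤ s ^ (q - 1) :=
          Real.rpow_le_rpow (by linarith) (by linarith) (by linarith)
      _ ≤ s ^ (1:ℝ) := Real.rpow_le_rpow_of_exponent_le hs (by linarith)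
      _ = s := Real.rpow_one s
  have k3 : s ^ q ≤ (s - 1) ^ q + 2 * s := by
    rw [e s (by linarith), e (s - 1) (by linarith)]
    nlinarith
  have k4 : 0 ≤ (s - 1) ^ q := Real.rpow_nonneg (by linarith) _
  have k5 : (q - 1) / 3 * s ^ q ≤ (q - 1) / 3 * ((s - 1) ^ q + 2 * s) :=
    mul_le_mul_of_nonneg_left k3 (by linarith)
  nlinarith

/-- For `0 < a ≤ b < 1` with `a + b ≤ 1`, `q ∈ (1,2)` and `|x| ≥ a`:
`a·|x/a + 1|^q + b·|x/b − 1|^q − (a + b) ≥ (q − 1)·|x|^q / 3`. -/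
theorem action_increase_ineq_out (a b q x : ℝ) (ha : 0 < a) (hab : a ≤ b) (hb : b < 1)
    (hab1 : a + b ≤ 1) (hq : q ∈ Set.Ioo (1:ℝ) 2) (hx : a ≤ |x|) :
    (q - 1) * |x| ^ q / 3 ≤ a * |x / a + 1| ^ q + b * |x / b - 1| ^ q - (a + b) := by
  obtain ⟨h1, h2⟩ := hq
  have hb0 : 0 < b := by linarith
  have hB : 1 - q * (x / b) ≤ |x / b - 1| ^ q := by
    rcases le_total (x / b) 1 with h | h
    · have := one_add_mul_self_le_rpow_one_add (s := -(x / b)) (by linarith) h1.le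
      rw [abs_sub_comm, abs_of_nonneg (by linarith)]
      have e : 1 + -(x / b) = 1 - x / b := by ring
      rw [e] at this
      linarith
    · have := Real.rpow_nonneg (abs_nonneg (x / b - 1)) q
      nlinarith
  have hB' : b - q * x ≤ b * |x / b - 1| ^ q := by
    have := mul_le_mul_of_nonneg_left hB hb0.le
    have e : b * (1 - q * (x / b)) = b - q * x := by field_simp
    linarith
  have hxa : x = a * (x / a) := by field_simp
  generalize x / a = t at *
  have hxt : |x| = a * |t| := by rw [hxa, abs_mul, abs_of_pos ha]
  have ht : 1 ≤ |t| := by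
    rw [hxt] at hx
    nlinarith
  have hA : (q - 1) / 3 * |t| ^ q ≤ |t + 1| ^ q - 1 - q * t := by
    rcases le_total 0 t with h | h
    · rw [abs_of_nonneg h] at *
      rw [abs_of_nonneg (by linarith), add_comm t 1]
      exact aux_pos q t h1 h2 ht
    · rw [abs_of_nonpos h] at *
      have := aux_neg q (-t) h1 h2 ht
      rw [abs_of_nonpos (by linarith), show -(t + 1) = -t - 1 by ring]
      linarith
  have haq : a ^ q ≤ a := by
    simpa using Real.rpow_le_rpow_of_exponent_ge ha (by linarith) h1.le
  have hC : |x| ^ q ≤ a * |t| ^ q := by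
    rw [hxt, Real.mul_rpow ha.le (abs_nonneg t)]
    exact mul_le_mul_of_nonneg_right haq (Real.rpow_nonneg (abs_nonneg t) _)
  have hA' := mul_le_mul_of_nonneg_left hA ha.le
  have hC' := mul_le_mul_of_nonneg_left hC (show 0 ≤ (q - 1) / 3 by linarith)
  have e : q * x = q * (a * t) := by rw [← hxa]
  linarith
end

section
/- For real numbers 0 < a ≤ b, real q ∈ (1, 2), and any real x ∈ (−a, a), we have a·(1 + x/a)^q + b·(1 − x/b)^q − (a + b) ≥ (q(q − 1) / (3a)) · x². -/
lemma aux_neg_bern (q t : ℝ) (h1 : 1 < q) (h2 : q < 2) (ht : -1 < t) :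
    1 - (2 - q) * t ≤ (1 + t) ^ (q - 2) := by
  have hp : 0 < 1 + t := by linarith
  have h := rpow_one_add_le_one_add_mul_self ht.le (p := 2 - q) (by linarith) (by linarith)
  have hpos : 0 < (1 + t) ^ (2 - q) := Real.rpow_pos_of_pos hp _
  have e : (1 + t) ^ (q - 2) = ((1 + t) ^ (2 - q))⁻¹ := by
    rw [← Real.rpow_neg hp.le]; congr 1; ring
  rw [e, ← one_div, le_div_iff₀ hpos]
  by_cases hs : 0 ≤ 1 - (2 - q) * t
  · nlinarith [mul_le_mul_of_nonneg_left h hs, sq_nonneg ((2 - q) * t)]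
  · nlinarith

lemma aux_taylor (q t : ℝ) (h1 : 1 < q) (h2 : q < 2) (ht : -1 < t) :
    q * (q - 1) * (t ^ 2 / 2 - (2 - q) * t ^ 3 / 6) ≤ (1 + t) ^ q - 1 - q * t := by
  let g : ℝ → ℝ := fun t => (1 + t) ^ q - 1 - q * t -
    q * (q - 1) * (t ^ 2 / 2 - (2 - q) * t ^ 3 / 6)
  let g1 : ℝ → ℝ := fun t => q * (1 + t) ^ (q - 1) - q -
    q * (q - 1) * (t - (2 - q) * t ^ 2 / 2)
  let g2 : ℝ → ℝ := fun t => q * ((q - 1) * (1 + t) ^ (q - 2)) -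
    q * (q - 1) * (1 - (2 - q) * t)
  have hd : ∀ p y : ℝ, -1 < y →
      HasDerivAt (fun t : ℝ => (1 + t) ^ p) (p * (1 + y) ^ (p - 1)) y := by
    intro p y hy
    have := ((hasDerivAt_id y).const_add 1).rpow_const (p := p)
      (Or.inl (by simp only [id]; linarith))
    simpa using this
  have hpw : ∀ (n : ℕ) (y : ℝ), HasDerivAt (fun t : ℝ => t ^ n) (n * y ^ (n - 1)) y :=
    fun n y => hasDerivAt_pow n y
  have hg : ∀ y, -1 < y → HasDerivAt g (g1 y) y := by
    intro y hy
    have := (((hd q y hy).sub_const 1).sub ((hasDerivAt_id y).const_mul q)).sub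
      ((((hpw 2 y).div_const 2).sub (((hpw 3 y).const_mul (2 - q)).div_const 6)).const_mul
        (q * (q - 1)))
    refine this.congr_deriv ?_
    simp only [g1]; push_cast; ring
  have hg1 : ∀ y, -1 < y → HasDerivAt g1 (g2 y) y := by
    intro y hy
    have := (((hd (q - 1) y hy).const_mul q).sub_const q).sub
      (((hasDerivAt_id y).sub (((hpw 2 y).const_mul (2 - q)).div_const 2)).const_mul
        (q * (q - 1)))
    refine this.congr_deriv ?_
    have e : q - 1 - 1 = q - 2 := by ring
    simp only [g2, e]; push_cast; ring
  have hc : ConvexOn ℝ (Set.Ioi (-1 : ℝ)) g := by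
    refine convexOn_of_hasDerivWithinAt2_nonneg (f' := g1) (f'' := g2) (convex_Ioi _)
      (fun y hy => (hg y hy).continuousAt.continuousWithinAt) ?_ ?_ ?_
    · intro y hy
      rw [interior_Ioi] at hy
      exact (hg y hy).hasDerivWithinAt
    · intro y hy
      rw [interior_Ioi] at hy
      exact (hg1 y hy).hasDerivWithinAt
    · intro y hy
      rw [interior_Ioi] at hy
      have h := aux_neg_bern q y h1 h2 hy
      have hq : 0 ≤ q * (q - 1) := mul_nonneg (by linarith) (by linarith)
      have := mul_le_mul_of_nonneg_left h hq
      simp only [g2]; linarith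
  have hm : IsMinOn g (Set.Ioi (-1 : ℝ)) 0 := by
    refine hc.isMinOn_of_rightDeriv_eq_zero (by simp) ?_
    rw [(hg 0 (by norm_num)).hasDerivWithinAt.derivWithin (uniqueDiffWithinAt_Ioi 0)]
    simp [g1]
  have h0 : g 0 ≤ g t := hm (show t ∈ Set.Ioi (-1 : ℝ) from ht)
  have e0 : g 0 = 0 := by simp [g]
  rw [e0] at h0
  simp only [g] at h0
  linarith

/-- For `0 < a ≤ b`, `q ∈ (1,2)` and `x ∈ (−a, a)`:
`a·(1 + x/a)^q + b·(1 − x/b)^q − (a + b) ≥ (q(q − 1)/(3a))·x²`. -/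
theorem action_increase_ineq_in (a b q x : ℝ) (ha : 0 < a) (hab : a ≤ b)
    (hq : q ∈ Set.Ioo (1:ℝ) 2) (hx : x ∈ Set.Ioo (-a) a) :
    q * (q - 1) / (3 * a) * x ^ 2 ≤ a * (1 + x / a) ^ q + b * (1 - x / b) ^ q - (a + b) := by
  obtain ⟨h1, h2⟩ := hq
  obtain ⟨hx1, hx2⟩ := hx
  have hb : 0 < b := by linarith
  obtain ⟨t, rfl⟩ : ∃ t, x = a * t := ⟨x / a, by field_simp⟩
  have ht1 : -1 < t := by nlinarith
  have ht2 : t < 1 := by nlinarith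
  have hA := aux_taylor q t h1 h2 ht1
  have hB : 1 + q * (-(a * t / b)) ≤ (1 + -(a * t / b)) ^ q := by
    refine one_add_mul_self_le_rpow_one_add ?_ h1.le
    rw [neg_le_neg_iff, div_le_one hb]; linarith
  have hB2 := mul_le_mul_of_nonneg_left hB hb.le
  have eB : b * (1 + q * (-(a * t / b))) = b - q * (a * t) := by field_simp; ring
  rw [eB, ← sub_eq_add_neg] at hB2
  have hk : q * (q - 1) * (t ^ 2 / 3) ≤ q * (q - 1) * (t ^ 2 / 2 - (2 - q) * t ^ 3 / 6) := by
    refine mul_le_mul_of_nonneg_left ?_ (mul_nonneg (by linarith) (by linarith))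
    have : (2 - q) * t ≤ 1 := by nlinarith
    nlinarith [mul_le_mul_of_nonneg_right this (sq_nonneg t)]
  have hA2 := mul_le_mul_of_nonneg_left (hk.trans hA) ha.le
  have e1 : a * t / a = t := by field_simp
  have e2 : q * (q - 1) / (3 * a) * (a * t) ^ 2 = a * (q * (q - 1) * (t ^ 2 / 3)) := by
    field_simp
  rw [e1, e2]
  linarith
end

section
/- For all real numbers p > 1 and x ≥ 2, we have x^p − (x − 1)^{p−1} · x ≥ p − 1. -/
/-- For all `p > 1` and `x ≥ 2`: `x^p − (x − 1)^{p−1}·x ≥ p − 1`. -/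
theorem pow_sub_pow_mul_ge (p x : ℝ) (hp : 1 < p) (hx : 2 ≤ x) :
    p - 1 ≤ x ^ p - (x - 1) ^ (p - 1) * x := by
  obtain ⟨q, rfl⟩ : ∃ q, p = q + 1 := ⟨p - 1, by ring⟩
  have hq : 0 < q := by linarith
  have hx0 : 0 < x := by linarith
  have hy0 : 0 < x - 1 := by linarith
  rw [Real.rpow_add hx0, Real.rpow_one, add_sub_cancel_right]
  rcases le_total 1 q with h | h
  · have hb := one_add_mul_self_le_rpow_one_add (s := 1 / (x - 1)) (p := q)
      (by have : 0 < 1 / (x - 1) := by positivity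
          linarith) h
    have e : x ^ q = (x - 1) ^ q * (1 + 1 / (x - 1)) ^ q := by
      rw [← Real.mul_rpow hy0.le (by positivity)]
      congr 1
      field_simp
      ring
    have h1 : x - 1 ≤ (x - 1) ^ q := Real.self_le_rpow_of_one_le (by linarith) h
    have h2 : (x - 1) ^ q * (1 + q * (1 / (x - 1))) ≤ x ^ q := by
      rw [e]
      exact mul_le_mul_of_nonneg_left hb (by positivity)
    have h3 : q ≤ (x - 1) ^ q * (q * (1 / (x - 1))) := by
      calc q = (x - 1) * (q * (1 / (x - 1))) := by field_simp
        _ ≤ _ := mul_le_mul_of_nonneg_right h1 (by positivity)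
    have h4 : q ≤ x ^ q - (x - 1) ^ q := by linarith
    nlinarith
  · have hb := rpow_one_add_le_one_add_mul_self (s := -(1 / x)) (p := q)
      (by have : 1 / x ≤ 1 := by
            rw [div_le_one hx0]; linarith
          linarith) hq.le h
    have hs : 0 ≤ 1 + -(1 / x) := by
      have : 1 / x ≤ 1 := by
        rw [div_le_one hx0]; linarith
      linarith
    have e : (x - 1) ^ q = x ^ q * (1 + -(1 / x)) ^ q := by
      rw [← Real.mul_rpow hx0.le hs]
      congr 1
      field_simp
      ring
    have h1 : 1 ≤ x ^ q := Real.one_le_rpow (by linarith) hq.le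
    have h2 : (x - 1) ^ q * x ≤ x ^ q * (1 + q * -(1 / x)) * x := by
      rw [e]
      gcongr
    have h3 : x ^ q * (1 + q * -(1 / x)) * x = x ^ q * x - x ^ q * q := by
      field_simp
      try ring
    nlinarith
end

section
/- Let m ≥ 1 and let (u_1, v_1), ..., (u_m, v_m) ∈ [0,1] × ℝ with u_1 < ... < u_m. Suppose for each subset X ⊆ {1, ..., m} there is a function f_X : [0,1] → ℝ such that f_X(u_i) > v_i for every i ∈ X and f_X(u_i) < v_i for every i ∉ X. Then there exist weights w_X ∈ [0,1] for X ⊆ {1,...,m} with ∑_X w_X = 1 such that the function f = ∑_X w_X · f_X satisfies f(u_i) = v_i for all 1 ≤ i ≤ m. -/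
/-- Given `m ≥ 1` points `(uᵢ, vᵢ) ∈ [0,1] × ℝ` with `u` strictly increasing, and for each
subset `X ⊆ {1,…,m}` a function `f_X` with `f_X(uᵢ) > vᵢ` for `i ∈ X` and `f_X(uᵢ) < vᵢ`
for `i ∉ X`, some convex combination `∑_X w_X f_X` passes through all `m` points. -/
theorem convex_combination_interpolates (m : ℕ) (hm : 1 ≤ m) (u v : Fin m → ℝ)
    (hu : StrictMono u) (huI : ∀ i, u i ∈ Set.Icc (0:ℝ) 1)
    (F : Finset (Fin m) → ℝ → ℝ)
    (hF : ∀ X : Finset (Fin m), ∀ i : Fin m,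
      (i ∈ X → v i < F X (u i)) ∧ (i ∉ X → F X (u i) < v i)) :
    ∃ w : Finset (Fin m) → ℝ,
      (∀ X, w X ∈ Set.Icc (0:ℝ) 1) ∧
      (∑ X : Finset (Fin m), w X) = 1 ∧
      ∀ i : Fin m, (∑ X : Finset (Fin m), w X * F X (u i)) = v i := by
  classical
  let P : Finset (Fin m) → Fin m → ℝ := fun X i => F X (u i)
  have key : v ∈ convexHull ℝ (Set.range P) := by
    by_contra hv
    obtain ⟨g, c, h1, h2⟩ := geometric_hahn_banach_point_closed (convex_convexHull ℝ (Set.range P))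
      ((Set.finite_range P).isClosed_convexHull ℝ) hv
    let X : Finset (Fin m) := Finset.univ.filter fun i => g (Pi.single i 1) < 0
    have h3 := h2 (P X) (subset_convexHull ℝ _ ⟨X, rfl⟩)
    have e : ∀ x : Fin m → ℝ, g x = ∑ i, x i * g (Pi.single i 1) := by
      intro x
      conv_lhs => rw [pi_eq_sum_univ' x]
      simp [map_sum]
    have h4 : g (P X) ≤ g v := by
      rw [e, e]
      refine Finset.sum_le_sum fun i _ => ?_
      by_cases hi : g (Pi.single i 1) < 0
      · have := (hF X i).1 (by simp [X, hi])
        exact mul_le_mul_of_nonpos_right this.le hi.le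
      · have := (hF X i).2 (by simpa [X] using hi)
        exact mul_le_mul_of_nonneg_right this.le (not_lt.1 hi)
    linarith
  have hS : convexHull ℝ (Set.range P) ⊆
      {x | ∃ w : Finset (Fin m) → ℝ, (∀ X, 0 ≤ w X) ∧ ∑ X, w X = 1 ∧ ∑ X, w X • P X = x} := by
    refine convexHull_min ?_ ?_
    · rintro _ ⟨X, rfl⟩
      refine ⟨Pi.single X 1, fun Y => ?_, by simp, ?_⟩
      · by_cases h : Y = X
        · subst h; simp
        · simp [h]
      · simp [Pi.single_apply]
    · rintro _ ⟨w, hw, hw1, rfl⟩ _ ⟨w', hw', hw1', rfl⟩ a b ha hb hab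
      refine ⟨fun X => a * w X + b * w' X, fun X => ?_, ?_, ?_⟩
      · have := hw X
        have := hw' X
        positivity
      · rw [Finset.sum_add_distrib, ← Finset.mul_sum, ← Finset.mul_sum, hw1, hw1']
        simpa using hab
      · simp [add_smul, mul_smul, Finset.sum_add_distrib, Finset.smul_sum]
  obtain ⟨w, hw, hw1, hwv⟩ := hS key
  refine ⟨w, fun X => ⟨hw X, ?_⟩, hw1, fun i => ?_⟩
  · rw [← hw1]
    exact Finset.single_le_sum (fun Y _ => hw Y) (Finset.mem_univ X)
  · have := congrFun hwv i
    simpa [P, Finset.sum_apply] using this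
end
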